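/- arXiv:2301.07167 — 3 statements merged into one kernel-verified Lean document; each statement's English description precedes it below -/
import Mathlib

section
/- Let E = EuclideanSpace ℝ n and let q : E → E → ℂ be a symmetric bilinear form (q(x,y) = q(y,x)). Let F : E → ℂ be differentiable and suppose fderiv ℝ F x g = -i·q(x,g)·F(x) for all x, g ∈ E. Then F(x) = F(0)·exp(-(i/2)·q(x,x)) for all x ∈ E. -/
/-- Converse of the paper's equation (sha): any differentiable `F` satisfying
`∂_g F(x) = -i·q(x,g)·F(x)` for a symmetric bilinear form `q` and all directions `g`
must be the Gaussian `F(x) = F(0)·exp(-(i/2)·q(x,x))`. -/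
theorem annihilated_is_gaussian {n : ℕ}
    (q : EuclideanSpace ℝ (Fin n) →ₗ[ℝ] EuclideanSpace ℝ (Fin n) →ₗ[ℝ] ℂ)
    (hq : ∀ x y, q x y = q y x)
    (F : EuclideanSpace ℝ (Fin n) → ℂ) (hF : Differentiable ℝ F)
    (hFeq : ∀ x g, fderiv ℝ F x g = -Complex.I * q x g * F x) :
    ∀ x, F x = F 0 * Complex.exp (-(Complex.I / 2) * q x x) := by
  intro x
  have hline : ∀ t : ℝ, HasDerivAt (fun t : ℝ => F (t • x))
      (-Complex.I * ((t : ℂ) * q x x) * F (t • x)) t := by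
    intro t
    have h1 : HasDerivAt (fun t : ℝ => t • x) x t := by
      simpa using (hasDerivAt_id t).smul_const x
    have h2 := (hF (t • x)).hasFDerivAt.comp_hasDerivAt t h1
    rw [hFeq] at h2
    simpa [Function.comp_def] using h2
  have hexp : ∀ t : ℝ, HasDerivAt
      (fun t : ℝ => Complex.exp ((Complex.I / 2) * q x x * ((t : ℂ) * (t : ℂ))))
      (Complex.exp ((Complex.I / 2) * q x x * ((t : ℂ) * (t : ℂ))) *
        ((Complex.I / 2) * q x x * (1 * (t : ℂ) + (t : ℂ) * 1))) t := by
    intro t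
    have h0 : HasDerivAt (fun t : ℝ => (t : ℂ)) 1 t := Complex.ofRealCLM.hasDerivAt
    exact ((h0.mul h0).const_mul _).cexp
  have hprod : ∀ t : ℝ, HasDerivAt (fun t : ℝ => F (t • x) *
      Complex.exp ((Complex.I / 2) * q x x * ((t : ℂ) * (t : ℂ)))) 0 t := by
    intro t
    refine ((hline t).mul (hexp t)).congr_deriv ?_
    ring
  have hc := is_const_of_deriv_eq_zero (fun t => (hprod t).differentiableAt)
    (fun t => (hprod t).deriv) 1 0
  simp only [one_smul, zero_smul, Complex.ofReal_one, Complex.ofReal_zero, mul_zero, mul_one,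
    Complex.exp_zero] at hc
  rw [← hc, mul_assoc, ← Complex.exp_add]
  simp
end

section
/- Let E = EuclideanSpace ℝ n and let r : E → E → ℂ be a symmetric bilinear form (r(x,y) = r(y,x)). Let c ∈ ℂ and define the vacuum Ψ₀ : E → ℂ by Ψ₀(x) = c·exp(-r(x,x)). Then Ψ₀ is differentiable and for all x, u ∈ E: fderiv ℝ Ψ₀ x u + 2·r(x,u)·Ψ₀(x) = 0; consequently, for any w ∈ ℂ and u ∈ E, the annihilation operator value (i/2)·w·(fderiv ℝ Ψ₀ x u + 2·r(x,u)·Ψ₀(x)) vanishes for all x. -/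
/-- Finite-dimensional analogue of the paper's main claim: the Gaussian vacuum
`Ψ₀(x) = c·exp(-r(x,x))` built from a symmetric bilinear form `r` is differentiable,
satisfies `∂_u Ψ₀(x) + 2·r(x,u)·Ψ₀(x) = 0`, and hence is annihilated by the modified
annihilation operator `(i/2)·w·(∂_u + 2·r(·,u))`. -/
theorem vacuum_annihilated {n : ℕ}
    (r : EuclideanSpace ℝ (Fin n) →ₗ[ℝ] EuclideanSpace ℝ (Fin n) →ₗ[ℝ] ℂ)
    (hr : ∀ x y, r x y = r y x) (c : ℂ)
    (Ψ₀ : EuclideanSpace ℝ (Fin n) → ℂ)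
    (hΨ₀ : ∀ x, Ψ₀ x = c * Complex.exp (-r x x)) :
    Differentiable ℝ Ψ₀ ∧
      (∀ x u, fderiv ℝ Ψ₀ x u + 2 * r x u * Ψ₀ x = 0) ∧
      (∀ (w : ℂ) (u x : EuclideanSpace ℝ (Fin n)),
        Complex.I / 2 * w * (fderiv ℝ Ψ₀ x u + 2 * r x u * Ψ₀ x) = 0) := by
  let B : EuclideanSpace ℝ (Fin n) →L[ℝ] EuclideanSpace ℝ (Fin n) →L[ℝ] ℂ :=
    LinearMap.toContinuousLinearMap
      ((LinearMap.toContinuousLinearMap :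
        (EuclideanSpace ℝ (Fin n) →ₗ[ℝ] ℂ) ≃ₗ[ℝ] _).toLinearMap ∘ₗ r)
  have hB : ∀ x y, B x y = r x y := fun x y => rfl
  have hΨ : Ψ₀ = fun x => c * Complex.exp (-(B x x)) := by
    funext x
    rw [hΨ₀, hB]
  have hd := fun x => (((B.hasFDerivAt (x := x)).clm_apply
    (hasFDerivAt_id (𝕜 := ℝ) x)).neg.cexp).const_mul c
  have hd' : ∀ x, HasFDerivAt Ψ₀ _ x := fun x => by
    rw [hΨ]
    exact hd x
  have key : ∀ x u, fderiv ℝ Ψ₀ x u + 2 * r x u * Ψ₀ x = 0 := by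
    intro x u
    rw [(hd' x).fderiv, hΨ₀]
    simp [hB, hr u x]
    ring
  exact ⟨fun x => (hd' x).differentiableAt, key, fun w u x => by rw [key, mul_zero]⟩
end

section
/- Let V be a complex vector space with a nondegenerate symmetric bilinear form ⟨·,·⟩ : V → V → ℂ. Let A, C, D, M : V →ₗ[ℂ] V be linear maps and B : V ≃ₗ[ℂ] V, and assume the symmetry relations ⟨u, B v⟩ = ⟨v, B u⟩, ⟨u, C v⟩ = ⟨v, C u⟩, and ⟨h, A g⟩ = -⟨g, D h⟩ for all u, v, g, h ∈ V. Then the identity (i/2)·⟨g, M g⟩ - (1/4)·(⟨h, B h⟩ - 2·⟨h, B(M g)⟩ + ⟨M g, B(M g)⟩) = (i/2)·⟨h, g⟩ - (1/4)·(⟨h, A g⟩ + ⟨h, B h⟩ - ⟨g, C g⟩ - ⟨g, D h⟩) holds for all g, h ∈ V if and only if both: (1) B ∘ M = i•id - A, and (2) ⟨g, C g⟩ = 2i·⟨g, M g⟩ - ⟨M g, B(M g)⟩ for all g ∈ V. -/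
/-- The exponent-matching equation (ot) of the paper: given the symmetry relations
(consistency2) and a nondegenerate symmetric bilinear form, the identity
`(i/2)⟨g,Mg⟩ - (1/4)(⟨h,Bh⟩ - 2⟨h,B(Mg)⟩ + ⟨Mg,B(Mg)⟩)
  = (i/2)⟨h,g⟩ - (1/4)(⟨h,Ag⟩ + ⟨h,Bh⟩ - ⟨g,Cg⟩ - ⟨g,Dh⟩)`
holds for all `g, h` if and only if `B∘M = i·id - A` and
`⟨g,Cg⟩ = 2i⟨g,Mg⟩ - ⟨Mg,B(Mg)⟩` for all `g` (relations (consistency3)). -/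
theorem exponent_matching {V : Type*} [AddCommGroup V] [Module ℂ V]
    (inn : V →ₗ[ℂ] V →ₗ[ℂ] ℂ)
    (hsymm : ∀ u v : V, inn u v = inn v u)
    (hnd : ∀ v : V, (∀ h : V, inn h v = 0) → v = 0)
    (A C D M : V →ₗ[ℂ] V) (B : V ≃ₗ[ℂ] V)
    (hB : ∀ u v : V, inn u (B v) = inn v (B u))
    (hC : ∀ u v : V, inn u (C v) = inn v (C u))
    (hAD : ∀ h g : V, inn h (A g) = -inn g (D h)) :
    (∀ g h : V,
        Complex.I / 2 * inn g (M g) -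
          (1 / 4 : ℂ) * (inn h (B h) - 2 * inn h (B (M g)) + inn (M g) (B (M g))) =
        Complex.I / 2 * inn h g -
          (1 / 4 : ℂ) * (inn h (A g) + inn h (B h) - inn g (C g) - inn g (D h))) ↔
      ((B : V →ₗ[ℂ] V) ∘ₗ M = Complex.I • LinearMap.id - A ∧
       ∀ g : V, inn g (C g) =
          2 * Complex.I * inn g (M g) - inn (M g) (B (M g))) := by
  constructor
  · intro H
    have h2 : ∀ g : V, inn g (C g) =
        2 * Complex.I * inn g (M g) - inn (M g) (B (M g)) := by
      intro g
      have h0 := H g 0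
      simp only [map_zero, LinearMap.zero_apply] at h0
      linear_combination -4 * h0
    refine ⟨?_, h2⟩
    ext g
    rw [← sub_eq_zero]
    apply hnd
    intro h
    have h1 := H g h
    have h3 := h2 g
    have h4 := hAD h g
    simp only [LinearMap.comp_apply, LinearMap.sub_apply, LinearMap.smul_apply,
      LinearMap.id_apply, LinearEquiv.coe_coe, map_sub, map_smul, smul_eq_mul]
    linear_combination 2 * h1 + (1 / 2 : ℂ) * h3 + (1 / 2 : ℂ) * h4
  · rintro ⟨h1, h2⟩ g h
    have h3 := h2 g
    have h4 := hAD h g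
    have h5 : inn h (B (M g)) = Complex.I * inn h g - inn h (A g) := by
      have := congrArg (inn h) (LinearMap.congr_fun h1 g)
      simpa only [LinearMap.comp_apply, LinearMap.sub_apply, LinearMap.smul_apply,
        LinearMap.id_apply, LinearEquiv.coe_coe, map_sub, map_smul, smul_eq_mul] using this
    linear_combination (1 / 2 : ℂ) * h5 - (1 / 4 : ℂ) * h3 - (1 / 4 : ℂ) * h4
end
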